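/- Assume ◊: there exists a sequence (A_α)_{α<ω₁} with A_α ⊆ α for each α, such that for every B ⊆ ω₁ the set {α < ω₁ : B ∩ α = A_α} is stationary in ω₁ (i.e., meets every closed unbounded subset of ω₁). Then there exists a set Y ⊆ ℝ such that every subset of Y is a γ-set (in the subspace topology of ℝ) and Y is not strongly meager: there is a Lebesgue measure-zero set G' ⊆ ℝ with Y + G' = ℝ. -/

import Mathlib

open Set MeasureTheory Filter Pointwise
open scoped ENNReal

/-- The Cantor space `2^ω`: functions `ω → {0,1}` with the product topology and
coordinatewise addition mod 2 (via `ZMod 2`). -/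
abbrev Cantor : Type := ℕ → ZMod 2

/-- `μ` is the product measure on `2^ω` giving each coordinate the uniform measure:
every cylinder prescribing the coordinates in a finite set `s` has measure `2^{-|s|}`.
(This property characterizes the product measure uniquely.) -/
def IsCantorProductMeasure (μ : Measure Cantor) : Prop :=
  ∀ (s : Finset ℕ) (f : ℕ → ZMod 2),
    μ {x : Cantor | ∀ i ∈ s, x i = f i} = (2 : ENNReal)⁻¹ ^ s.card

/-- A family `J` of subsets is an ω-cover of `X` if every finite subset of `X`
is contained in some member of `J`. -/
def IsOmegaCover {α : Type*} (J : Set (Set α)) (X : Set α) : Prop :=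
  ∀ F : Finset α, ↑F ⊆ X → ∃ U ∈ J, ↑F ⊆ U

/-- `X` is a γ-set (equivalently: `X` with the subspace topology is a γ-space):
for every ω-cover `J` of `X` by open subsets of the ambient space there is a sequence
`D n ∈ J` with `X ⊆ ⋃_m ⋂_{n>m} D n`. -/
def IsGammaSet {α : Type*} [TopologicalSpace α] (X : Set α) : Prop :=
  ∀ J : Set (Set α), (∀ U ∈ J, IsOpen U) → IsOmegaCover J X →
    ∃ D : ℕ → Set α, (∀ n, D n ∈ J) ∧ X ⊆ ⋃ m, ⋂ n > m, D n

/-- The blocks endpoints `k_n = Σ_{i=0}^n 2^i = 2^{n+1} - 1`. -/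
def kseq (n : ℕ) : ℕ := 2 ^ (n + 1) - 1

/-- `A_n = {x ∈ 2^ω : x ↾ [k_n, k_{n+1}) = 0}`. -/
def Aset (n : ℕ) : Set Cantor := {x | ∀ i ∈ Set.Ico (kseq n) (kseq (n + 1)), x i = 0}

/-- The null set `G = ⋂_m ⋃_{n>m} A_n`. -/
def Gset : Set Cantor := ⋂ m, ⋃ n > m, Aset n

/-- The rationals: eventually-zero elements of `2^ω`. -/
def Qset : Set Cantor := {z | ∀ᶠ n in atTop, z n = 0}

/-- `𝒮 = {z ∈ 2^ω : z ↾ [k_n, k_{n+1}) = 1 for infinitely many n}`. -/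
def Sset : Set Cantor :=
  {z | ∃ᶠ n in atTop, ∀ i ∈ Set.Ico (kseq n) (kseq (n + 1)), z i = 1}

/-- `[x]* = {z ∈ 𝒮 : z(n) ≤ x(n) for all but finitely many n}`. -/
def starSet (x : Cantor) : Set Cantor :=
  {z ∈ Sset | ∀ᶠ n in atTop, (z n).val ≤ (x n).val}

/-- `𝔭 = 2^{ℵ₀}`: every family of infinite subsets of `ω` of size `< 2^{ℵ₀}` with the
finite intersection property (all finite intersections infinite) has an infinite
pseudo-intersection. -/
def PseudoIntersectionNumberEqContinuum : Prop :=
  ∀ F : Set (Set ℕ), Cardinal.mk F < 2 ^ Cardinal.aleph0 →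
    (∀ A ∈ F, A.Infinite) →
    (∀ G : Finset (Set ℕ), ↑G ⊆ F → (⋂₀ (G : Set (Set ℕ))).Infinite) →
    ∃ A : Set ℕ, A.Infinite ∧ ∀ B ∈ F, (A \ B).Finite

/-- The first uncountable ordinal `ω₁`. -/
noncomputable def omega1 : Ordinal.{0} := (Cardinal.aleph 1).ord

/-- `C` is closed unbounded in `ω₁`: a subset of `ω₁` which is unbounded in `ω₁` and
contains the supremum of every nonempty bounded subset of itself whose supremum is
below `ω₁`. -/
def IsClubIn (C : Set Ordinal.{0}) : Prop :=
  C ⊆ Set.Iio omega1 ∧ (∀ β < omega1, ∃ γ ∈ C, β < γ) ∧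
    ∀ S : Set Ordinal.{0}, S ⊆ C → S.Nonempty → BddAbove S → sSup S < omega1 → sSup S ∈ C

/-- `T` is stationary in `ω₁`: it meets every closed unbounded subset of `ω₁`. -/
def IsStationaryIn (T : Set Ordinal.{0}) : Prop :=
  ∀ C : Set Ordinal.{0}, IsClubIn C → (T ∩ C).Nonempty

/-- Jensen's diamond principle `◊`: there is a sequence `(A_α)_{α<ω₁}` with `A_α ⊆ α`
such that for every `B ⊆ ω₁` the set `{α < ω₁ : B ∩ α = A_α}` is stationary in `ω₁`. -/
def DiamondPrinciple : Prop :=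
  ∃ A : Ordinal.{0} → Set Ordinal.{0}, (∀ α < omega1, A α ⊆ Set.Iio α) ∧
    ∀ B : Set Ordinal.{0}, B ⊆ Set.Iio omega1 →
      IsStationaryIn {α | α < omega1 ∧ B ∩ Set.Iio α = A α}

/-- The binary expansion map `f : 2^ω → [0,1]`, `f(x) = Σ_i x(i)·2^{-(i+1)}`. -/
noncomputable def binmap (x : Cantor) : ℝ := ∑' i : ℕ, ((x i).val : ℝ) / 2 ^ (i + 1)

/-- `H = ⋂_m ⋃_{n>m} f(A_n)`. -/
noncomputable def Hset : Set ℝ := ⋂ m, ⋃ n > m, binmap '' (Aset n)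

/-- The rational numbers as a subset of `ℝ`. -/
def Qreal : Set ℝ := Set.range ((↑) : ℚ → ℝ)

/-- A family of nonempty compact sets of reals which is dense in its members (`shrink`) and each of
whose members can be split into finitely many members such that every `y` with `|y| ≤ k` satisfies
`y - s ⊆ U k` for some piece `s`, for arbitrarily large `k`. -/
structure IsSplittingFamily (U : ℕ → Set ℝ) (P : Set (Set ℝ)) : Prop where
  isCompact : ∀ p ∈ P, IsCompact p
  nonempty : ∀ p ∈ P, p.Nonempty
  shrink : ∀ p ∈ P, ∀ x ∈ p, ∀ O, IsOpen O → x ∈ O → ∃ q ∈ P, q ⊆ p ∧ q ⊆ O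
  split : ∀ p ∈ P, ∀ m : ℕ, ∃ k ≥ m, ∃ S : Set (Set ℝ), S.Finite ∧ S ⊆ P ∧ (∀ s ∈ S, s ⊆ p) ∧
    ∀ y : ℝ, |y| ≤ k → ∃ s ∈ S, ∀ x ∈ s, y - x ∈ U k

namespace IsSplittingFamily

variable {U : ℕ → Set ℝ}

theorem sUnion {C : Set (Set (Set ℝ))} (h : ∀ P ∈ C, IsSplittingFamily U P) :
    IsSplittingFamily U (⋃₀ C) where
  isCompact := fun p ⟨P, hP, hp⟩ => (h P hP).isCompact p hp
  nonempty := fun p ⟨P, hP, hp⟩ => (h P hP).nonempty p hp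
  shrink := fun p ⟨P, hP, hp⟩ x hx O hO hxO => by
    obtain ⟨q, hq, h1⟩ := (h P hP).shrink p hp x hx O hO hxO
    exact ⟨q, ⟨P, hP, hq⟩, h1⟩
  split := fun p ⟨P, hP, hp⟩ m => by
    obtain ⟨k, hk, S, hS, hSP, h1⟩ := (h P hP).split p hp m
    exact ⟨k, hk, S, hS, fun s hs => ⟨P, hP, hSP hs⟩, h1⟩

theorem exists_sub_mem_frequently {P : Set (Set ℝ)} (h : IsSplittingFamily U P) {p : Set ℝ}
    (hp : p ∈ P) (y : ℝ) : ∃ x ∈ p, ∃ᶠ k in atTop, y - x ∈ U k := by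
  have key : ∀ (n : ℕ) (q : P), ∃ r : P, r.1 ⊆ q.1 ∧ ∃ k ≥ n, ∀ x ∈ r.1, y - x ∈ U k := by
    rintro n ⟨q, hq⟩
    obtain ⟨k, hk, S, -, hSP, hSq, hS⟩ := h.split q hq (max n ⌈|y|⌉₊)
    obtain ⟨s, hs, hsU⟩ := hS y ((Nat.le_ceil _).trans
      (by exact_mod_cast (le_max_right _ _).trans hk))
    exact ⟨⟨s, hSP hs⟩, hSq s hs, k, (le_max_left _ _).trans hk, hsU⟩
  choose next hsub hnext using key
  let r : ℕ → P := fun n => Nat.rec ⟨p, hp⟩ next n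
  obtain ⟨x, hx⟩ := IsCompact.nonempty_iInter_of_sequence_nonempty_isCompact_isClosed
    (fun n => (r n).1) (fun n => hsub n (r n)) (fun n => h.nonempty _ (r n).2)
    (h.isCompact _ (r 0).2) (fun n => (h.isCompact _ (r n).2).isClosed)
  rw [mem_iInter] at hx
  refine ⟨x, hx 0, frequently_atTop.2 fun n => ?_⟩
  obtain ⟨k, hk, hkU⟩ := hnext n (r n)
  exact ⟨k, hk, hkU x (hx (n + 1))⟩

theorem exists_subset_small {P : Set (Set ℝ)} (h : IsSplittingFamily U P) {p : Set ℝ}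
    (hp : p ∈ P) {ε : ℝ} (hε : 0 < ε) : ∃ q ∈ P, q ⊆ p ∧ ∀ x ∈ q, ∀ y ∈ q, dist x y < ε := by
  obtain ⟨x, hx⟩ := h.nonempty p hp
  obtain ⟨q, hq, hqp, hqb⟩ := h.shrink p hp x hx _ Metric.isOpen_ball
    (Metric.mem_ball_self (half_pos hε))
  refine ⟨q, hq, hqp, fun a ha b hb => ?_⟩
  have h1 := Metric.mem_ball.1 (hqb ha)
  have h2 := Metric.mem_ball'.1 (hqb hb)
  linarith [dist_triangle a x b]

end IsSplittingFamily

/-- The sets at depth `i` below `r` in the scheme `F`, where `r` sits at stage `j`. -/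
def schemeLevel (F : ℕ → Set (Set ℝ)) (j : ℕ) (r : Set ℝ) : ℕ → Set (Set ℝ)
  | 0 => {r}
  | i + 1 => {s ∈ F (j + i + 1) | ∃ t ∈ schemeLevel F j r i, s ⊆ t}

/-- The fusion of the part of the scheme `F` below `r`, where `r` sits at stage `j`. -/
def schemeFusion (F : ℕ → Set (Set ℝ)) (j : ℕ) (r : Set ℝ) : Set ℝ :=
  ⋂ i, ⋃₀ schemeLevel F j r i

/-- The family of all fusions of a scheme. -/
def schemeFamily (F : ℕ → Set (Set ℝ)) : Set (Set ℝ) :=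
  ⋃ j, schemeFusion F j '' F j

section Scheme

variable {F : ℕ → Set (Set ℝ)} {j : ℕ} {r : Set ℝ}

theorem schemeLevel_subset (hr : r ∈ F j) (i : ℕ) : schemeLevel F j r i ⊆ F (j + i) := by
  cases i with
  | zero => rintro s rfl; exact hr
  | succ i => exact fun s hs => hs.1

theorem sUnion_schemeLevel_antitone : Antitone fun i => ⋃₀ schemeLevel F j r i := by
  refine antitone_nat_of_succ_le fun i => ?_
  rintro x ⟨s, ⟨-, t, ht, hst⟩, hx⟩
  exact ⟨t, ht, hst hx⟩

theorem schemeFusion_subset : schemeFusion F j r ⊆ r := fun x hx => by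
  obtain ⟨s, rfl, hs⟩ := mem_iInter.1 hx 0
  exact hs

theorem schemeLevel_trans {i : ℕ} {s : Set ℝ} (hs : s ∈ schemeLevel F j r i) (i' : ℕ) :
    schemeLevel F (j + i) s i' ⊆ schemeLevel F j r (i + i') := by
  induction i' with
  | zero => rintro t rfl; exact hs
  | succ i' ih =>
    rintro t ⟨ht, u, hu, htu⟩
    exact ⟨by rwa [add_assoc j i i'] at ht, u, ih hu, htu⟩

theorem schemeFusion_mono {i : ℕ} {s : Set ℝ} (hs : s ∈ schemeLevel F j r i) :
    schemeFusion F (j + i) s ⊆ schemeFusion F j r := fun x hx => by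
  refine mem_iInter.2 fun i' => sUnion_schemeLevel_antitone (Nat.le_add_left i' i) ?_
  obtain ⟨t, ht, hxt⟩ := mem_iInter.1 hx i'
  exact ⟨t, schemeLevel_trans hs i' ht, hxt⟩

theorem exists_mem_of_mem_sUnion_schemeFamily {x : ℝ} (hx : x ∈ ⋃₀ schemeFamily F) :
    ∃ j, ∀ i ≥ j, ∃ s ∈ F i, x ∈ s := by
  obtain ⟨q, hq, hxq⟩ := hx
  obtain ⟨j, r, hr, rfl⟩ := mem_iUnion.1 hq
  refine ⟨j, fun i hi => ?_⟩
  obtain ⟨i, rfl⟩ := Nat.exists_eq_add_of_le hi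
  obtain ⟨s, hs, hxs⟩ := mem_iInter.1 hxq i
  exact ⟨s, schemeLevel_subset hr i hs, hxs⟩

theorem isSplittingFamily_schemeFamily {U : ℕ → Set ℝ} (hfin : ∀ j, (F j).Finite)
    (hcpt : ∀ j, ∀ r ∈ F j, IsCompact r) (hne : ∀ j, ∀ r ∈ F j, r.Nonempty)
    (hsmall : ∀ j, ∀ r ∈ F (j + 1), ∀ x ∈ r, ∀ y ∈ r, dist x y < 1 / ((j : ℝ) + 1))
    (hsplit : ∀ j, ∀ r ∈ F j, ∃ k ≥ j, ∀ y : ℝ, |y| ≤ k →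
      ∃ s ∈ F (j + 1), s ⊆ r ∧ ∀ x ∈ s, y - x ∈ U k) :
    IsSplittingFamily U (schemeFamily F) := by
  have hchild : ∀ j, ∀ r ∈ F j, ∃ s ∈ F (j + 1), s ⊆ r := fun j r hr => by
    obtain ⟨k, -, hk⟩ := hsplit j r hr
    obtain ⟨s, hs, hsr, -⟩ := hk 0 (by simp)
    exact ⟨s, hs, hsr⟩
  have hlev : ∀ j, ∀ r ∈ F j, ∀ i, (schemeLevel F j r i).Nonempty := fun j r hr i => by
    induction i with
    | zero => exact ⟨r, rfl⟩
    | succ i ih =>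
      obtain ⟨t, ht⟩ := ih
      obtain ⟨s, hs, hst⟩ := hchild _ t (schemeLevel_subset hr i ht)
      exact ⟨s, hs, t, ht, hst⟩
  have hclosed : ∀ j, ∀ r ∈ F j, ∀ i, IsCompact (⋃₀ schemeLevel F j r i) := fun j r hr i =>
    ((hfin _).subset (schemeLevel_subset hr i)).isCompact_sUnion fun s hs =>
      hcpt _ s (schemeLevel_subset hr i hs)
  refine ⟨?_, ?_, ?_, ?_⟩
  · intro p hp
    obtain ⟨j, r, hr, rfl⟩ := mem_iUnion.1 hp
    exact (hcpt j r hr).of_isClosed_subset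
      (isClosed_iInter fun i => (hclosed j r hr i).isClosed) schemeFusion_subset
  · intro p hp
    obtain ⟨j, r, hr, rfl⟩ := mem_iUnion.1 hp
    refine IsCompact.nonempty_iInter_of_sequence_nonempty_isCompact_isClosed _
      (fun i => sUnion_schemeLevel_antitone (Nat.le_succ i)) (fun i => ?_) (hclosed j r hr 0)
      (fun i => (hclosed j r hr i).isClosed)
    obtain ⟨s, hs⟩ := hlev j r hr i
    obtain ⟨x, hx⟩ := hne _ s (schemeLevel_subset hr i hs)
    exact ⟨x, s, hs, hx⟩
  · intro p hp x hx O hO hxO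
    obtain ⟨j, r, hr, rfl⟩ := mem_iUnion.1 hp
    obtain ⟨ε, hε, hball⟩ := Metric.isOpen_iff.1 hO x hxO
    obtain ⟨n, hn⟩ := exists_nat_one_div_lt hε
    obtain ⟨s, hs, hxs⟩ := mem_iInter.1 hx (n + 1)
    have hsF := schemeLevel_subset hr _ hs
    refine ⟨_, mem_iUnion.2 ⟨_, s, hsF, rfl⟩, schemeFusion_mono hs,
      schemeFusion_subset.trans fun y hy => hball ?_⟩
    refine Metric.mem_ball.2 ((hsmall (j + n) s hsF y hy x hxs).trans (lt_of_le_of_lt ?_ hn))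
    gcongr
    simp
  · intro p hp m
    obtain ⟨j, r, hr, rfl⟩ := mem_iUnion.1 hp
    obtain ⟨t, ht⟩ := hlev j r hr m
    obtain ⟨k, hk, hky⟩ := hsplit _ t (schemeLevel_subset hr m ht)
    refine ⟨k, (Nat.le_add_left m j).trans hk,
      schemeFusion F (j + (m + 1)) '' schemeLevel F j r (m + 1),
      ((hfin _).subset (schemeLevel_subset hr _)).image _, ?_, ?_, ?_⟩
    · rintro _ ⟨s, hs, rfl⟩
      exact mem_iUnion.2 ⟨_, s, schemeLevel_subset hr _ hs, rfl⟩
    · rintro _ ⟨s, hs, rfl⟩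
      exact schemeFusion_mono hs
    · intro y hy
      obtain ⟨s, hs, hst, hsU⟩ := hky y hy
      exact ⟨_, ⟨s, ⟨hs, t, ht, hst⟩, rfl⟩, fun x hx => hsU x (schemeFusion_subset hx)⟩

theorem exists_subset_of_mem_scheme (hr : r ∈ F j) : ∃ q ∈ schemeFamily F, q ⊆ r :=
  ⟨_, mem_iUnion.2 ⟨j, r, hr, rfl⟩, schemeFusion_subset⟩

theorem countable_schemeFamily (hfin : ∀ j, (F j).Finite) : (schemeFamily F).Countable :=
  countable_iUnion fun j => (hfin j).countable.image _

end Scheme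

theorem exists_finset_exhaustion {α : Type*} {Z : Set α} (hZ : Z.Countable) :
    ∃ g : ℕ → Finset α, (∀ n, ↑(g n) ⊆ Z) ∧ ∀ z ∈ Z, ∀ᶠ n in atTop, z ∈ g n := by
  classical
  rcases Z.eq_empty_or_nonempty with rfl | hne
  · exact ⟨fun _ => ∅, by simp, by simp⟩
  · obtain ⟨e, rfl⟩ := hZ.exists_eq_range hne
    refine ⟨fun n => (Finset.range n).image e, fun n => ?_, ?_⟩
    · simp only [Finset.coe_image]
      exact image_subset_range _ _
    · rintro _ ⟨i, rfl⟩
      filter_upwards [eventually_gt_atTop i] with n hn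
      exact Finset.mem_image_of_mem _ (Finset.mem_range.2 hn)

namespace IsSplittingFamily

variable {U : ℕ → Set ℝ} {P : Set (Set ℝ)}

theorem exists_shrink_into_cover (h : IsSplittingFamily U P) {e : Set ℝ}
    (he : ∀ p ∈ P, ∃ q ∈ P, q ⊆ p ∧ q ⊆ e) {Z : Set ℝ} {J : Set (Set ℝ)}
    (hJo : ∀ O ∈ J, IsOpen O) (hJ : IsOmegaCover J Z) {g : Finset ℝ} (hg : ↑g ⊆ Z)
    {W : Set (Set ℝ)} (hW : W.Finite) (hWP : W ⊆ P) {ε : ℝ} (hε : 0 < ε) :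
    ∃ D ∈ J, ↑g ⊆ D ∧ ∀ w ∈ W, ∃ s ∈ P, s ⊆ w ∧ s ⊆ e ∧ (∀ x ∈ s, ∀ y ∈ s, dist x y < ε) ∧
      (s ⊆ D ∨ ∃ p ∈ P, s ⊆ p ∧ Disjoint p Z) := by
  classical
  have key : ∀ w ∈ P, ∃ s ∈ P, s ⊆ w ∧ s ⊆ e ∧ (∀ x ∈ s, ∀ y ∈ s, dist x y < ε) := by
    intro w hw
    obtain ⟨q, hq, hqw, hqe⟩ := he w hw
    obtain ⟨s, hs, hsq, hsε⟩ := h.exists_subset_small hq hε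
    exact ⟨s, hs, hsq.trans hqw, hsq.trans hqe, hsε⟩
  choose! s hsP hsw hse hsε using key
  have hz : ∀ w : Set ℝ, ∃ z, ¬ Disjoint (s w) Z → z ∈ s w ∧ z ∈ Z := by
    intro w
    by_cases hd : Disjoint (s w) Z
    · exact ⟨0, fun h => (h hd).elim⟩
    · obtain ⟨z, hz⟩ := not_disjoint_iff.1 hd
      exact ⟨z, fun _ => hz⟩
  choose z hz using hz
  obtain ⟨D, hDJ, hD⟩ := hJ (g ∪ (hW.toFinset.filter fun w => ¬ Disjoint (s w) Z).image z) (by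
    intro x hx
    simp only [Finset.coe_union, Finset.coe_image, Finset.coe_filter, Finite.mem_toFinset] at hx
    rcases hx with hx | ⟨w, hw, rfl⟩
    · exact hg hx
    · exact (hz w hw.2).2)
  refine ⟨D, hDJ, fun x hx => hD (by simp [Finset.mem_coe.1 hx]), fun w hw => ?_⟩
  by_cases hd : Disjoint (s w) Z
  · exact ⟨s w, hsP w (hWP hw), hsw w (hWP hw), hse w (hWP hw), hsε w (hWP hw),
      .inr ⟨s w, hsP w (hWP hw), Subset.rfl, hd⟩⟩
  · have hzD : z w ∈ D := hD (by
      simp only [Finset.coe_union, Finset.coe_image, Finset.coe_filter, Finite.mem_toFinset]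
      exact .inr ⟨w, ⟨hw, hd⟩, rfl⟩)
    obtain ⟨t, ht, htw, htD⟩ := h.shrink _ (hsP w (hWP hw)) _ (hz w hd).1 D (hJo D hDJ) hzD
    exact ⟨t, ht, htw.trans (hsw w (hWP hw)), htw.trans (hse w (hWP hw)),
      fun x hx y hy => hsε w (hWP hw) x (htw hx) y (htw hy), .inl htD⟩

theorem exists_scheme_step (h : IsSplittingFamily U P) {e : Set ℝ}
    (he : ∀ p ∈ P, ∃ q ∈ P, q ⊆ p ∧ q ⊆ e) {Z : Set ℝ} {J : Set (Set ℝ)}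
    (hJo : ∀ O ∈ J, IsOpen O) (hJ : IsOmegaCover J Z) {g : Finset ℝ} (hg : ↑g ⊆ Z)
    {F : Set (Set ℝ)} (hF : F.Finite) (hFP : F ⊆ P) {p : Set ℝ} (hp : p ∈ P) (j : ℕ)
    {ε : ℝ} (hε : 0 < ε) :
    ∃ F' : Set (Set ℝ), F'.Finite ∧ F' ⊆ P ∧ (∃ r ∈ F', r ⊆ p) ∧
      (∀ r ∈ F, ∃ k ≥ j, ∀ y : ℝ, |y| ≤ k → ∃ s ∈ F', s ⊆ r ∧ ∀ x ∈ s, y - x ∈ U k) ∧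
      (∀ s ∈ F', s ⊆ e ∧ ∀ x ∈ s, ∀ y ∈ s, dist x y < ε) ∧
      ∃ D ∈ J, ↑g ⊆ D ∧ ∀ s ∈ F', s ⊆ D ∨ ∃ p ∈ P, s ⊆ p ∧ Disjoint p Z := by
  have hsp := fun r (hr : r ∈ F) => h.split r (hFP hr) j
  choose! k hk S hSfin hSP hSr hSU using hsp
  obtain ⟨D, hDJ, hgD, hD⟩ := h.exists_shrink_into_cover he hJo hJ hg
    (W := insert p (⋃ r ∈ F, S r)) ((hF.biUnion hSfin).insert p)
    (insert_subset hp (iUnion₂_subset hSP)) hε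
  choose! t htP htw hte htε htD using hD
  refine ⟨t '' insert p (⋃ r ∈ F, S r), ((hF.biUnion hSfin).insert p).image t,
    image_subset_iff.2 htP, ⟨t p, mem_image_of_mem t (mem_insert _ _), htw p (mem_insert _ _)⟩,
    fun r hr => ⟨k r, hk r hr, fun y hy => ?_⟩, ?_, D, hDJ, hgD, ?_⟩
  · obtain ⟨s, hs, hsU⟩ := hSU r hr y hy
    have hsW : s ∈ insert p (⋃ r ∈ F, S r) := .inr (mem_biUnion hr hs)
    exact ⟨t s, mem_image_of_mem t hsW, (htw s hsW).trans (hSr r hr s hs),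
      fun x hx => hsU x (htw s hsW hx)⟩
  · rintro _ ⟨s, hs, rfl⟩
    exact ⟨hte s hs, htε s hs⟩
  · rintro _ ⟨s, hs, rfl⟩
    exact htD s hs

theorem exists_scheme (h : IsSplittingFamily U P) {p e : ℕ → Set ℝ} (hp : ∀ j, p j ∈ P)
    (he : ∀ j, ∀ p ∈ P, ∃ q ∈ P, q ⊆ p ∧ q ⊆ e j) {Z : Set ℝ} {J : ℕ → Set (Set ℝ)}
    (hJo : ∀ j, ∀ O ∈ J j, IsOpen O) (hJ : ∀ j, IsOmegaCover (J j) Z) {g : ℕ → Finset ℝ}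
    (hg : ∀ j, ↑(g j) ⊆ Z) :
    ∃ (F : ℕ → Set (Set ℝ)) (D : ℕ → Set ℝ), (∀ j, (F j).Finite) ∧ (∀ j, F j ⊆ P) ∧
      (∀ j, ∃ r ∈ F (j + 1), r ⊆ p j) ∧
      (∀ j, ∀ r ∈ F j, ∃ k ≥ j, ∀ y : ℝ, |y| ≤ k →
        ∃ s ∈ F (j + 1), s ⊆ r ∧ ∀ x ∈ s, y - x ∈ U k) ∧
      (∀ j, ∀ s ∈ F (j + 1), s ⊆ e j) ∧
      (∀ j, ∀ s ∈ F (j + 1), ∀ x ∈ s, ∀ y ∈ s, dist x y < 1 / ((j : ℝ) + 1)) ∧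
      (∀ j, D j ∈ J j ∧ ↑(g j) ⊆ D j) ∧
      ∀ j, ∀ s ∈ F (j + 1), s ⊆ D j ∨ ∃ p ∈ P, s ⊆ p ∧ Disjoint p Z := by
  have key := fun (j : ℕ) (F : {F : Set (Set ℝ) // F.Finite ∧ F ⊆ P}) =>
    h.exists_scheme_step (he j) (hJo j) (hJ j) (hg j) F.2.1 F.2.2 (hp j) j
      (ε := 1 / ((j : ℝ) + 1)) (by positivity)
  choose next hfin hP hnew hsplit hsmall D hDJ hgD hD using key
  let F : ℕ → {F : Set (Set ℝ) // F.Finite ∧ F ⊆ P} :=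
    fun j => Nat.rec ⟨∅, finite_empty, empty_subset _⟩ (fun j G => ⟨next j G, hfin j G, hP j G⟩) j
  exact ⟨fun j => (F j).1, fun j => D j (F j), fun j => (F j).2.1, fun j => (F j).2.2,
    fun j => hnew j (F j), fun j => hsplit j (F j), fun j s hs => (hsmall j (F j) s hs).1,
    fun j s hs => (hsmall j (F j) s hs).2, fun j => ⟨hDJ j (F j), hgD j (F j)⟩,
    fun j => hD j (F j)⟩

/-- A countable splitting family can be refined to one that, for countably many ω-covers of a
countable set `Z`, is captured by sequences from these covers, except on members missing `Z`. -/
theorem exists_refinement {ι : Type*} [Countable ι] [Nonempty ι] (h : IsSplittingFamily U P)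
    (hPc : P.Countable) (hPne : P.Nonempty) {e : ι → Set ℝ}
    (he : ∀ i, ∀ p ∈ P, ∃ q ∈ P, q ⊆ p ∧ q ⊆ e i) {Z : Set ℝ} (hZ : Z.Countable)
    {J : ι → Set (Set ℝ)} (hJo : ∀ i, ∀ O ∈ J i, IsOpen O) :
    ∃ Q : Set (Set ℝ), Q.Countable ∧ IsSplittingFamily U Q ∧ (∀ p ∈ P, ∃ q ∈ Q, q ⊆ p) ∧
      (∀ i, ⋃₀ Q ⊆ e i) ∧ ∀ i, IsOmegaCover (J i) Z → ∃ D : ℕ → Set ℝ, (∀ n, D n ∈ J i) ∧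
        (∀ z ∈ Z, ∀ᶠ n in atTop, z ∈ D n) ∧
        ∀ x ∈ ⋃₀ Q, (∀ᶠ n in atTop, x ∈ D n) ∨ ∃ p ∈ P, x ∈ p ∧ Disjoint p Z := by
  classical
  obtain ⟨g, hgZ, hg⟩ := exists_finset_exhaustion hZ
  obtain ⟨p, rfl⟩ := hPc.exists_eq_range hPne
  obtain ⟨f, hf⟩ := exists_surjective_nat ι
  let J' : ι → Set (Set ℝ) := fun i => if IsOmegaCover (J i) Z then J i else {univ}
  have hJ'o : ∀ i, ∀ O ∈ J' i, IsOpen O := fun i O hO => by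
    by_cases hi : IsOmegaCover (J i) Z
    · simp only [J', if_pos hi] at hO; exact hJo i O hO
    · simp only [J', if_neg hi, mem_singleton_iff] at hO; exact hO ▸ isOpen_univ
  have hJ' : ∀ i, IsOmegaCover (J' i) Z := fun i => by
    by_cases hi : IsOmegaCover (J i) Z
    · simpa only [J', if_pos hi] using hi
    · simp only [J', if_neg hi]; exact fun A _ => ⟨univ, rfl, subset_univ _⟩
  obtain ⟨F, D, hfin, hFP, hnew, hsplit, hFe, hsmall, hDJ, hD⟩ := h.exists_scheme
    (p := p) (e := fun j => e (f j.unpair.1)) (J := fun j => J' (f j.unpair.1))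
    (fun j => mem_range_self j) (fun j => he _) (fun j => hJ'o _) (fun j => hJ' _) hgZ
  refine ⟨schemeFamily F, countable_schemeFamily hfin,
    isSplittingFamily_schemeFamily hfin (fun j r hr => h.isCompact r (hFP j hr))
      (fun j r hr => h.nonempty r (hFP j hr)) hsmall hsplit, ?_, fun i x hx => ?_, ?_⟩
  · rintro _ ⟨j, rfl⟩
    obtain ⟨r, hr, hrp⟩ := hnew j
    obtain ⟨q, hq, hqr⟩ := exists_subset_of_mem_scheme hr
    exact ⟨q, hq, hqr.trans hrp⟩
  · obtain ⟨j, hj⟩ := exists_mem_of_mem_sUnion_schemeFamily hx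
    obtain ⟨n, rfl⟩ := hf i
    obtain ⟨s, hs, hxs⟩ := hj (Nat.pair n j + 1) ((Nat.right_le_pair n j).trans (Nat.le_succ _))
    simpa using hFe _ s hs hxs
  · intro i hi
    obtain ⟨n, rfl⟩ := hf i
    have hpair : Tendsto (fun m => Nat.pair n m) atTop atTop :=
      tendsto_atTop_mono (fun m => Nat.right_le_pair n m) tendsto_id
    refine ⟨fun m => D (Nat.pair n m), fun m => ?_, fun z hz => ?_, fun x hx => ?_⟩
    · have := (hDJ (Nat.pair n m)).1
      simpa only [Nat.unpair_pair, J', if_pos hi] using this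
    · filter_upwards [hpair.eventually (hg z hz)] with m hm
      exact (hDJ _).2 hm
    · by_cases hd : ∃ p' ∈ range p, x ∈ p' ∧ Disjoint p' Z
      · exact .inr hd
      refine .inl ?_
      obtain ⟨j, hj⟩ := exists_mem_of_mem_sUnion_schemeFamily hx
      filter_upwards [hpair.eventually (eventually_ge_atTop j)] with m hm
      obtain ⟨s, hs, hxs⟩ := hj (Nat.pair n m + 1) (hm.trans (Nat.le_succ _))
      rcases hD _ s hs with hsD | ⟨p', hp', hsp, hdis⟩
      · exact hsD hxs
      · exact (hd ⟨p', hp', hsp hxs, hdis⟩).elim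

end IsSplittingFamily

/-- A neighbourhood of the multiples of `2⁻ᵏ` in `[-2ᵏ, 2ᵏ]`. -/
def dyadicNhd (k : ℕ) : Set ℝ :=
  ⋃ m ∈ Finset.Icc (-(4 ^ k) : ℤ) (4 ^ k), Metric.ball ((m : ℝ) / 2 ^ k) (2 / 8 ^ k)

theorem volume_dyadicNhd_le (k : ℕ) :
    volume (dyadicNhd k) ≤ ENNReal.ofReal (12 * (1 / 2) ^ k) := by
  refine (measure_biUnion_finset_le _ _).trans ?_
  simp only [Real.volume_ball, Finset.sum_const, Int.card_Icc, nsmul_eq_mul]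
  rw [← ENNReal.ofReal_natCast, ← ENNReal.ofReal_mul (by positivity)]
  apply ENNReal.ofReal_le_ofReal
  have h1 : ((4 : ℤ) ^ k + 1 - -(4 ^ k)).toNat = 2 * 4 ^ k + 1 := by
    have : (4 : ℤ) ^ k = ((4 ^ k : ℕ) : ℤ) := by push_cast; rfl
    rw [this]; omega
  rw [h1]
  have h2 : (1 : ℝ) ≤ 4 ^ k := one_le_pow₀ (by norm_num)
  have h3 : (8 : ℝ) ^ k = 4 ^ k * 2 ^ k := by rw [← mul_pow]; norm_num
  push_cast
  rw [h3, one_div, inv_pow]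
  have h4 : (0 : ℝ) < 2 ^ k := by positivity
  field_simp
  nlinarith

theorem volume_frequently_dyadicNhd : volume {x : ℝ | ∃ᶠ k in atTop, x ∈ dyadicNhd k} = 0 := by
  refine measure_setOfPred_frequently_eq_zero (ne_top_of_le_ne_top ?_
    (ENNReal.tsum_le_tsum volume_dyadicNhd_le))
  have hs : Summable fun k : ℕ => (12 : ℝ) * (1 / 2) ^ k :=
    (summable_geometric_of_lt_one (by norm_num) (by norm_num)).mul_left _
  exact hs.tsum_ofReal_ne_top

/-- The nondegenerate closed subintervals of `[0, 1]` with rational endpoints. -/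
def rationalIntervals : Set (Set ℝ) :=
  {p | ∃ a b : ℚ, 0 ≤ a ∧ a < b ∧ b ≤ 1 ∧ p = Icc (a : ℝ) b}

theorem countable_rationalIntervals : rationalIntervals.Countable := by
  refine (countable_range fun x : ℚ × ℚ => Icc (x.1 : ℝ) x.2).mono ?_
  rintro _ ⟨a, b, -, -, -, rfl⟩
  exact ⟨(a, b), rfl⟩

theorem nonempty_rationalIntervals : rationalIntervals.Nonempty :=
  ⟨_, 0, 1, le_rfl, one_pos, le_rfl, rfl⟩

theorem exists_sub_mem_dyadicNhd {k : ℕ} (hk : 3 ≤ k) {c : ℕ} (hc : c ≤ 2 ^ k) {y : ℝ}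
    (hy : |y| ≤ k) : ∃ i : ℕ, i < 4 ^ k ∧ ∀ x ∈ Icc ((c : ℝ) / 2 ^ k + i / 8 ^ k)
      ((c : ℝ) / 2 ^ k + (i + 1) / 8 ^ k), y - x ∈ dyadicNhd k := by
  have h2 : (0 : ℝ) < 2 ^ k := by positivity
  have h4 : (0 : ℝ) < 4 ^ k := by positivity
  have h8 : (0 : ℝ) < 8 ^ k := by positivity
  have e8 : (8 : ℝ) ^ k = 4 ^ k * 2 ^ k := by rw [← mul_pow]; norm_num
  have e4 : (4 : ℝ) ^ k = 2 ^ k * 2 ^ k := by rw [← mul_pow]; norm_num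
  have hkb : (k : ℝ) + 2 ≤ 2 ^ k := by
    have : ∀ n, 3 ≤ n → n + 2 ≤ 2 ^ n := fun n hn => by
      induction n, hn using Nat.le_induction with
      | base => norm_num
      | succ n hn ih => rw [pow_succ]; omega
    exact_mod_cast this k hk
  set t : ℝ := 2 ^ k * y - c with ht
  set m : ℤ := ⌊t⌋
  have hm0 : (0 : ℝ) ≤ t - m := sub_nonneg.2 (Int.floor_le t)
  have hm1 : t - m < 1 := by linarith [Int.lt_floor_add_one t]
  obtain ⟨hy1, hy2⟩ := abs_le.1 hy
  have hcR : (c : ℝ) ≤ 2 ^ k := by exact_mod_cast hc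
  refine ⟨⌊4 ^ k * (t - m)⌋₊, ?_, fun x hx => ?_⟩
  · refine (Nat.floor_lt (mul_nonneg h4.le hm0)).2 ?_
    push_cast
    nlinarith
  · have hi0 := Nat.floor_le (mul_nonneg h4.le hm0)
    have hi1 := Nat.lt_floor_add_one (4 ^ k * (t - m))
    set i : ℕ := ⌊4 ^ k * (t - m)⌋₊
    have hmem : m ∈ Finset.Icc (-(4 ^ k) : ℤ) (4 ^ k) := by
      rw [Finset.mem_Icc]
      have hmt : (m : ℝ) ≤ t := Int.floor_le t
      have hmt' : t < m + 1 := Int.lt_floor_add_one t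
      constructor
      · have : (-(4 ^ k) : ℝ) ≤ m := by nlinarith
        exact_mod_cast this
      · have : (m : ℝ) ≤ 4 ^ k := by
          have : (0 : ℝ) ≤ c := by positivity
          nlinarith
        exact_mod_cast this
    refine mem_biUnion hmem ?_
    rw [Metric.mem_ball, Real.dist_eq, abs_lt]
    have hyv : y - c / 2 ^ k - m / 2 ^ k = 4 ^ k * (t - m) / 8 ^ k := by
      rw [e8, ht]; field_simp
    have g0 : (i : ℝ) / 8 ^ k ≤ 4 ^ k * (t - m) / 8 ^ k := by gcongr
    have g1 : 4 ^ k * (t - m) / 8 ^ k ≤ (i + 1) / 8 ^ k := by gcongr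
    have g2 : ((i : ℝ) + 1) / 8 ^ k = i / 8 ^ k + 1 / 8 ^ k := by ring
    have g3 : (2 : ℝ) / 8 ^ k = 1 / 8 ^ k + 1 / 8 ^ k := by ring
    have g4 : (0 : ℝ) < 1 / 8 ^ k := by positivity
    have hx1 := hx.1
    have hx2 := hx.2
    constructor <;> linarith

theorem isSplittingFamily_rationalIntervals :
    IsSplittingFamily dyadicNhd rationalIntervals where
  isCompact := by rintro _ ⟨a, b, -, -, -, rfl⟩; exact isCompact_Icc
  nonempty := by
    rintro _ ⟨a, b, -, hab, -, rfl⟩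
    exact nonempty_Icc.2 (by exact_mod_cast hab.le)
  shrink := by
    rintro _ ⟨a, b, ha, hab, hb, rfl⟩ x hx O hO hxO
    have habR : (a : ℝ) < b := by exact_mod_cast hab
    have hxc : x ∈ closure (Ioo (a : ℝ) b) := by rwa [closure_Ioo habR.ne]
    obtain ⟨z, hzO, hz⟩ := mem_closure_iff.1 hxc O hO hxO
    obtain ⟨l, u, hzlu, hlu⟩ := mem_nhds_iff_exists_Ioo_subset.1
      ((hO.inter isOpen_Ioo).mem_nhds ⟨hzO, hz⟩)
    obtain ⟨c, hc1, hc2⟩ := exists_rat_btwn hzlu.1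
    obtain ⟨d, hd1, hd2⟩ := exists_rat_btwn hzlu.2
    have hsub : Icc (c : ℝ) d ⊆ O ∩ Ioo (a : ℝ) b := (Icc_subset_Ioo hc1 hd2).trans hlu
    have hcd : (c : ℝ) < d := hc2.trans hd1
    have hac := (hsub (left_mem_Icc.2 hcd.le)).2.1
    have hdb := (hsub (right_mem_Icc.2 hcd.le)).2.2
    exact ⟨_, ⟨c, d, ha.trans (by exact_mod_cast hac.le), by exact_mod_cast hcd,
      le_trans (by exact_mod_cast hdb.le) hb, rfl⟩,
      fun w hw => Ioo_subset_Icc_self (hsub hw).2, fun w hw => (hsub hw).1⟩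
  split := by
    rintro _ ⟨a, b, ha, hab, hb, rfl⟩ m
    obtain ⟨n, hn⟩ := exists_pow_lt_of_lt_one (half_pos (sub_pos.2 hab))
      (show (1 / 2 : ℚ) < 1 by norm_num)
    let k := max n (m + 3)
    have hk : (1 / 2 : ℚ) ^ k < (b - a) / 2 :=
      (pow_le_pow_of_le_one (by norm_num) (by norm_num) (le_max_left _ _)).trans_lt hn
    have hkm : m + 3 ≤ k := le_max_right _ _
    clear_value k
    have h2 : (0 : ℚ) < 2 ^ k := by positivity
    have h4 : (0 : ℚ) < 4 ^ k := by positivity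
    have h8 : (0 : ℚ) < 8 ^ k := by positivity
    have e8 : (8 : ℚ) ^ k = 4 ^ k * 2 ^ k := by rw [← mul_pow]; norm_num
    rw [one_div, inv_pow] at hk
    let c := ⌈a * 2 ^ k⌉₊
    have hc1 : a ≤ c / 2 ^ k := (le_div_iff₀ h2).2 (Nat.le_ceil _)
    have hc2 : (c : ℚ) / 2 ^ k + 1 / 2 ^ k ≤ b := by
      have := Nat.ceil_lt_add_one (mul_nonneg ha h2.le)
      have h5 : (c : ℚ) / 2 ^ k ≤ a + 1 / 2 ^ k := by
        rw [div_le_iff₀ h2, add_mul, one_div, inv_mul_cancel₀ h2.ne']; exact this.le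
      rw [one_div] at *
      linarith
    have hc3 : c ≤ 2 ^ k := by
      have : (c : ℚ) / 2 ^ k ≤ 1 := by
        have : (0 : ℚ) < 1 / 2 ^ k := by positivity
        linarith
      rw [div_le_one h2] at this
      exact_mod_cast this
    have hi : ∀ i : ℕ, i < 4 ^ k → (c : ℚ) / 2 ^ k + (i + 1) / 8 ^ k ≤ b := fun i hi => by
      refine le_trans ?_ hc2
      have : ((i : ℚ) + 1) ≤ 4 ^ k := by exact_mod_cast hi
      refine add_le_add_right ?_ _
      rw [e8, div_le_div_iff₀ (by positivity) h2]
      nlinarith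
    refine ⟨k, by omega, (fun i : ℕ => Icc ((c : ℝ) / 2 ^ k + i / 8 ^ k)
      ((c : ℝ) / 2 ^ k + (i + 1) / 8 ^ k)) '' Iio (4 ^ k), (finite_Iio _).image _, ?_, ?_, ?_⟩
    · rintro _ ⟨i, hi4, rfl⟩
      refine ⟨c / 2 ^ k + i / 8 ^ k, c / 2 ^ k + (i + 1) / 8 ^ k, by positivity, ?_,
        (hi i hi4).trans hb, by push_cast; rfl⟩
      gcongr
      linarith
    · rintro _ ⟨i, hi4, rfl⟩
      refine Icc_subset_Icc ?_ (by simpa using Rat.cast_le (K := ℝ).2 (hi i hi4))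
      have : a ≤ (c : ℚ) / 2 ^ k + i / 8 ^ k := hc1.trans (le_add_of_nonneg_right (by positivity))
      simpa using Rat.cast_le (K := ℝ).2 this
    · intro y hy
      obtain ⟨i, hi4, hx⟩ := exists_sub_mem_dyadicNhd (by omega : 3 ≤ k) hc3 hy
      exact ⟨_, ⟨i, hi4, rfl⟩, hx⟩

theorem iSup_lt_omega1 {ι : Type*} [Countable ι] {f : ι → Ordinal.{0}}
    (hf : ∀ i, f i < omega1) : ⨆ i, f i < omega1 := by
  have h : omega1 = Ordinal.omega 1 := Cardinal.ord_aleph 1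
  simp only [h] at hf ⊢
  exact Ordinal.iSup_lt_omega_one hf

theorem isSuccLimit_omega1 : Order.IsSuccLimit omega1 :=
  Cardinal.isSuccLimit_ord (Cardinal.aleph0_le_aleph 1)

theorem omega0_lt_omega1 : Ordinal.omega0 < omega1 := by
  have h : omega1 = Ordinal.omega 1 := Cardinal.ord_aleph 1
  rw [h]
  exact Ordinal.omega0_lt_omega_one

theorem countable_Iio_of_lt_omega1 {δ : Ordinal.{0}} (hδ : δ < omega1) : (Iio δ).Countable := by
  rw [← Cardinal.le_aleph0_iff_set_countable, Cardinal.mk_Iio_ordinal]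
  have h : δ.card ≤ Cardinal.aleph0 := by simpa using Cardinal.lt_ord.1 hδ
  exact Cardinal.lift_le_aleph0.2 h

theorem isClubIn_setOf_closed {h : Ordinal.{0} → Ordinal.{0}} (hh : ∀ α < omega1, h α < omega1)
    {γ : Ordinal.{0}} (hγ : γ < omega1) :
    IsClubIn {δ | δ < omega1 ∧ γ < δ ∧ ∀ α < δ, h α ≤ δ} := by
  refine ⟨fun δ hδ => hδ.1, fun β hβ => ?_, fun S hS hne hbdd hlt => ⟨hlt, ?_, ?_⟩⟩
  · let next : Ordinal.{0} → Ordinal.{0} := fun δ => ⨆ α : Iio δ, h α.1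
    have hnext : ∀ ξ < omega1, ∀ α < ξ, h α ≤ next ξ := fun ξ hξ α hα => by
      have := (countable_Iio_of_lt_omega1 hξ).to_subtype
      exact le_ciSup (f := fun a : Iio ξ => h a.1) Ordinal.bddAbove_of_small ⟨α, hα⟩
    let s : ℕ → Ordinal.{0} := fun n => Nat.rec (Order.succ (max β γ)) (fun _ => next) n
    have hs : ∀ n, s n < omega1 := fun n => by
      induction n with
      | zero => exact isSuccLimit_omega1.succ_lt (max_lt hβ hγ)
      | succ n ih =>
        have := (countable_Iio_of_lt_omega1 ih).to_subtype
        exact iSup_lt_omega1 fun α => hh α.1 (α.2.trans ih)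
    have h0 : max β γ < ⨆ n, s n := (Order.lt_succ _).trans_le (Ordinal.le_iSup s 0)
    refine ⟨⨆ n, s n, ⟨iSup_lt_omega1 hs, (le_max_right _ _).trans_lt h0, fun α hα => ?_⟩,
      (le_max_left _ _).trans_lt h0⟩
    obtain ⟨n, hn⟩ := Ordinal.lt_iSup_iff.1 hα
    exact (hnext _ (hs n) α hn).trans (Ordinal.le_iSup s (n + 1))
  · obtain ⟨s, hs⟩ := hne
    exact (hS hs).2.1.trans_le (le_csSup hbdd hs)
  · intro α hα
    obtain ⟨s, hs, hαs⟩ := exists_lt_of_lt_csSup hne hα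
    exact ((hS hs).2.2 α hαs).trans (le_csSup hbdd hs)

theorem exists_diamond_code {A : Ordinal.{0} → Set Ordinal.{0}}
    (hA : ∀ B : Set Ordinal.{0}, B ⊆ Iio omega1 →
      IsStationaryIn {α | α < omega1 ∧ B ∩ Iio α = A α}) (S : Set ℕ) :
    ∃ γ < omega1, {n : ℕ | (n : Ordinal.{0}) ∈ A γ} = S := by
  obtain ⟨γ, ⟨hγ, hBγ⟩, -, hωγ, -⟩ := hA ((fun n : ℕ => (n : Ordinal.{0})) '' S)
    (by rintro _ ⟨n, -, rfl⟩; exact (Ordinal.natCast_lt_omega0 n).trans omega0_lt_omega1) _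
    (isClubIn_setOf_closed (h := fun _ => 0) (fun α hα => (zero_le (a := α)).trans_lt hα)
      omega0_lt_omega1)
  refine ⟨γ, hγ, ?_⟩
  ext n
  rw [mem_ofPred_eq, ← hBγ]
  constructor
  · rintro ⟨⟨m, hm, hmn⟩, -⟩
    rwa [← Nat.cast_inj.1 hmn]
  · exact fun hn => ⟨⟨n, hn, rfl⟩, (Ordinal.natCast_lt_omega0 n).trans hωγ⟩

/-- Transfinite recursion along the ordinals with a choice at each stage where one is possible. -/
theorem exists_transfinite_choice {Ω : Type*} [Nonempty Ω]
    (R : (δ : Ordinal.{0}) → (Iio δ → Ω) → Ω → Prop) :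
    ∃ f : Ordinal.{0} → Ω, ∀ δ, (∃ w, R δ (fun α => f α) w) → R δ (fun α => f α) (f δ) := by
  classical
  let step : (δ : Ordinal.{0}) → ((α : Ordinal.{0}) → α < δ → Ω) → Ω := fun δ g =>
    Classical.epsilon (R δ fun α => g α α.2)
  refine ⟨wellFounded_lt.fix step, fun δ hδ => ?_⟩
  conv => arg 3; rw [WellFounded.fix_eq]
  exact Classical.epsilon_spec hδ

theorem exists_seq_isOpen_finset_basis (X : Type*) [TopologicalSpace X]
    [SecondCountableTopology X] : ∃ V : ℕ → Set X, (∀ n, IsOpen (V n)) ∧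
      ∀ (F : Finset X) (O : Set X), IsOpen O → ↑F ⊆ O → ∃ n, ↑F ⊆ V n ∧ V n ⊆ O := by
  let B := TopologicalSpace.countableBasis X
  have hc : {t : Set (Set X) | t.Finite ∧ t ⊆ B}.Countable :=
    countable_ofPred_finite_subset (TopologicalSpace.countable_countableBasis X)
  obtain ⟨e, he⟩ := hc.exists_eq_range ⟨∅, finite_empty, empty_subset _⟩
  refine ⟨fun n => ⋃₀ e n, fun n => ?_, fun F O hO hFO => ?_⟩
  · have hn : e n ∈ {t : Set (Set X) | t.Finite ∧ t ⊆ B} := he ▸ mem_range_self n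
    exact isOpen_sUnion fun t ht => TopologicalSpace.isOpen_of_mem_countableBasis (hn.2 ht)
  · have key : ∀ x ∈ F, ∃ b ∈ B, x ∈ b ∧ b ⊆ O := fun x hx =>
      (TopologicalSpace.isBasis_countableBasis X).exists_subset_of_mem_open (hFO hx) hO
    choose! b hbB hxb hbO using key
    have hb : b '' F ∈ range e := he ▸ ⟨F.finite_toSet.image b, image_subset_iff.2 hbB⟩
    obtain ⟨n, hn⟩ := hb
    refine ⟨n, fun x hx => ⟨b x, hn ▸ mem_image_of_mem b hx, hxb x hx⟩, ?_⟩
    simp only [hn]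
    rintro y ⟨_, ⟨x, hx, rfl⟩, hy⟩
    exact hbO x hx hy

/-- One stage of the construction: `w.1` is a countable splitting family refining the rational
intervals and the earlier families `g i`, the point `w.2` takes care of translating the null set
onto `y`, and the covers `J i` of `Z` are captured on `⋃₀ w.1`, except on members missing `Z`. -/
structure IsRefiningStage {ι : Type*} (g : ι → Set (Set ℝ)) (J : ι → Set (Set ℝ)) (Z : Set ℝ)
    (y : ℝ) (w : Set (Set ℝ) × ℝ) : Prop where
  countable : w.1.Countable
  splitting : IsSplittingFamily dyadicNhd w.1
  dense : ∀ p ∈ rationalIntervals ∪ ⋃ i, g i, ∃ q ∈ w.1, q ⊆ p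
  sUnion_subset : ∀ i, ⋃₀ w.1 ⊆ ⋃₀ g i
  mem_sUnion : w.2 ∈ ⋃₀ w.1
  frequently_mem : ∃ᶠ k in atTop, y - w.2 ∈ dyadicNhd k
  capture : ∀ i, IsOmegaCover (J i) Z → ∃ D : ℕ → Set ℝ, (∀ n, D n ∈ J i) ∧
    (∀ z ∈ Z, ∀ᶠ n in atTop, z ∈ D n) ∧
    ∀ x ∈ ⋃₀ w.1, (∀ᶠ n in atTop, x ∈ D n) ∨
      ∃ p ∈ rationalIntervals ∪ ⋃ i, g i, x ∈ p ∧ Disjoint p Z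

theorem exists_isRefiningStage {ι : Type*} [Countable ι] {g : ι → Set (Set ℝ)}
    {J : ι → Set (Set ℝ)} {Z : Set ℝ} (y : ℝ) (hgc : ∀ i, (g i).Countable)
    (hg : ∀ i, IsSplittingFamily dyadicNhd (g i))
    (hsub : ∀ i, ∀ p ∈ rationalIntervals ∪ ⋃ i, g i,
      ∃ q ∈ rationalIntervals ∪ ⋃ i, g i, q ⊆ p ∧ q ⊆ ⋃₀ g i)
    (hZ : Z.Countable) (hJ : ∀ i, ∀ O ∈ J i, IsOpen O) :
    ∃ w, IsRefiningStage g J Z y w := by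
  have hP : IsSplittingFamily dyadicNhd (rationalIntervals ∪ ⋃ i, g i) := by
    rw [← sUnion_range, ← sUnion_insert]
    apply IsSplittingFamily.sUnion
    rintro _ (rfl | ⟨i, rfl⟩)
    exacts [isSplittingFamily_rationalIntervals, hg i]
  obtain ⟨Q, hQc, hQ, hQP, hQe, hQJ⟩ := hP.exists_refinement
    (countable_rationalIntervals.union (countable_iUnion hgc))
    (nonempty_rationalIntervals.mono subset_union_left)
    (e := fun o : Option ι => o.elim univ fun i => ⋃₀ g i)
    (Option.rec (fun p hp => ⟨p, hp, Subset.rfl, subset_univ p⟩) hsub) hZ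
    (J := fun o : Option ι => o.elim ∅ J) (Option.rec (fun O hO => hO.elim) hJ)
  obtain ⟨p, hp⟩ := nonempty_rationalIntervals
  obtain ⟨q, hq, -⟩ := hQP p (.inl hp)
  obtain ⟨x, hx, hxy⟩ := hQ.exists_sub_mem_frequently hq y
  exact ⟨(Q, x), hQc, hQ, hQP, fun i => hQe (some i), ⟨q, hq, hx⟩, hxy, fun i => hQJ (some i)⟩

theorem exists_forall_isRefiningStage (A : Ordinal.{0} → Set Ordinal.{0})
    {J : Ordinal.{0} → Set (Set ℝ)} (hJ : ∀ α, ∀ O ∈ J α, IsOpen O) (y : Ordinal.{0} → ℝ) :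
    ∃ (P : Ordinal.{0} → Set (Set ℝ)) (x : Ordinal.{0} → ℝ), ∀ δ < omega1,
      IsRefiningStage (fun α : Iio δ => P α) (fun α : Iio δ => J α) (x '' (A δ ∩ Iio δ)) (y δ)
        (P δ, x δ) := by
  obtain ⟨f, hf⟩ := exists_transfinite_choice (Ω := Set (Set ℝ) × ℝ) fun δ g w =>
    IsRefiningStage (fun α => (g α).1) (fun α : Iio δ => J α)
      ((fun α => (g α).2) '' (Subtype.val ⁻¹' A δ)) (y δ) w
  refine ⟨fun α => (f α).1, fun α => (f α).2, fun δ => ?_⟩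
  have himage : ∀ δ, (fun α => (f α).2) '' (A δ ∩ Iio δ) =
      (fun α : Iio δ => (f α).2) '' (Subtype.val ⁻¹' A δ) := fun δ => by
    rw [show (fun α : Iio δ => (f α).2) = (fun α => (f α).2) ∘ Subtype.val from rfl, image_comp,
      Subtype.image_preimage_coe, inter_comm]
  rw [himage]
  induction δ using WellFoundedLT.induction with
  | ind δ ih =>
    intro hδ
    have hstage := fun (α : Iio δ) => ih α α.2 (α.2.trans hδ)
    have := (countable_Iio_of_lt_omega1 hδ).to_subtype
    refine hf δ (exists_isRefiningStage (y δ) (fun α => (hstage α).countable)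
      (fun α => (hstage α).splitting) ?_ ((to_countable _).image _) fun α => hJ α)
    intro α p hp
    have hlater : ∀ q ∈ (f α).1, q ⊆ p →
        ∃ q ∈ rationalIntervals ∪ ⋃ β : Iio δ, (f β).1, q ⊆ p ∧ q ⊆ ⋃₀ (f α).1 :=
      fun q hq hqp => ⟨q, .inr (mem_iUnion.2 ⟨α, hq⟩), hqp, subset_sUnion_of_mem hq⟩
    rcases hp with hp | hp
    · obtain ⟨q, hq, hqp⟩ := (hstage α).dense p (.inl hp)
      exact hlater q hq hqp
    · obtain ⟨β, hβ⟩ := mem_iUnion.1 hp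
      rcases lt_trichotomy β.1 α.1 with h | h | h
      · obtain ⟨q, hq, hqp⟩ := (hstage α).dense p (.inr (mem_iUnion.2 ⟨⟨β, h⟩, hβ⟩))
        exact hlater q hq hqp
      · exact hlater p (by rwa [← h]) Subset.rfl
      · exact ⟨p, .inr hp, Subset.rfl,
          (subset_sUnion_of_mem hβ).trans ((hstage β).sUnion_subset ⟨α, h⟩)⟩

theorem exists_surjective_set_nat_real : ∃ d : Set ℕ → ℝ, Function.Surjective d := by
  obtain ⟨e⟩ := Cardinal.eq.1 (show Cardinal.mk (Set ℕ) = Cardinal.mk ℝ by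
    rw [Cardinal.mk_real, Cardinal.mk_set, Cardinal.mk_nat, Cardinal.two_power_aleph0])
  exact ⟨e, e.surjective⟩

/-- Given countable families `P α` for `α < ω₁`, the sequence `A` guesses `Z` along `x` at some
stage `δ > γ` such that every member of an earlier `P α` that meets `Z` in some `x β` with `β < ω₁`
already does so for some `β < δ`. -/
theorem exists_guessing_reflecting {A : Ordinal.{0} → Set Ordinal.{0}}
    (hA : ∀ B : Set Ordinal.{0}, B ⊆ Iio omega1 →
      IsStationaryIn {α | α < omega1 ∧ B ∩ Iio α = A α})
    {X : Type*} {P : Ordinal.{0} → Set (Set X)} (hP : ∀ α < omega1, (P α).Countable)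
    (x : Ordinal.{0} → X) (Z : Set X) {γ : Ordinal.{0}} (hγ : γ < omega1) :
    ∃ δ < omega1, γ < δ ∧ A δ = {β | β < δ ∧ x β ∈ Z} ∧
      ∀ α < δ, ∀ p ∈ P α, (∃ β < omega1, x β ∈ p ∩ Z) → ∃ β < δ, x β ∈ p ∩ Z := by
  have hw : ∀ p : Set X, ∃ β < omega1, (∃ β < omega1, x β ∈ p ∩ Z) → x β ∈ p ∩ Z := fun p => by
    by_cases h : ∃ β < omega1, x β ∈ p ∩ Z
    · obtain ⟨β, hβ, hx⟩ := h
      exact ⟨β, hβ, fun _ => hx⟩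
    · exact ⟨γ, hγ, fun h' => (h h').elim⟩
  choose b hb hbx using hw
  obtain ⟨δ, ⟨hδ, hBδ⟩, -, hγδ, hcl⟩ := hA {β | β < omega1 ∧ x β ∈ Z} (fun β hβ => hβ.1) _
    (isClubIn_setOf_closed (h := fun α => ⨆ p : P α, Order.succ (b p)) (fun α hα => by
      have := (hP α hα).to_subtype
      exact iSup_lt_omega1 fun p => isSuccLimit_omega1.succ_lt (hb p)) hγ)
  refine ⟨δ, hδ, hγδ, ?_, fun α hα p hp hβ => ⟨b p, ?_, hbx p hβ⟩⟩
  · rw [← hBδ]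
    ext β
    exact ⟨fun h => ⟨h.2, h.1.2⟩, fun h => ⟨⟨h.1.trans hδ, h.2⟩, h.1⟩⟩
  · have := (hP α (hα.trans hδ)).to_subtype
    have hle : Order.succ (b p) ≤ ⨆ p : P α, Order.succ (b p) :=
      le_ciSup (f := fun p : P α => Order.succ (b p)) Ordinal.bddAbove_of_small ⟨p, hp⟩
    exact (Order.lt_succ _).trans_le (hle.trans (hcl α hα))

theorem IsOmegaCover.mono {α : Type*} {J : Set (Set α)} {X Y : Set α} (h : IsOmegaCover J X)
    (hYX : Y ⊆ X) : IsOmegaCover J Y :=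
  fun F hF => h F (hF.trans hYX)

/-- Assume `◊`. Then there is a set `Y ⊆ ℝ` all of whose subsets are γ-sets, which is not
strongly meager: there is a Lebesgue-null set `G' ⊆ ℝ` with `Y + G' = ℝ`. -/
theorem real_hereditary_gammaSet_not_stronglyMeager_of_diamond (hd : DiamondPrinciple) :
    ∃ Y : Set ℝ, (∀ Z ⊆ Y, IsGammaSet Z) ∧
      ∃ G' : Set ℝ, volume G' = 0 ∧ Y + G' = Set.univ := by
  obtain ⟨A, -, hA⟩ := hd
  obtain ⟨V, hVo, hV⟩ := exists_seq_isOpen_finset_basis ℝ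
  obtain ⟨d, hdec⟩ := exists_surjective_set_nat_real
  let code : Ordinal.{0} → Set ℕ := fun γ => {n | (n : Ordinal.{0}) ∈ A γ}
  obtain ⟨P, x, hstage⟩ := exists_forall_isRefiningStage A (J := fun γ => V '' code γ)
    (by rintro γ _ ⟨n, -, rfl⟩; exact hVo n) (fun γ => d (code γ))
  refine ⟨x '' Iio omega1, fun Z hZ J hJo hJ => ?_, {t | ∃ᶠ k in atTop, t ∈ dyadicNhd k},
    volume_frequently_dyadicNhd, ?_⟩
  · obtain ⟨γ, hγ, hcode⟩ := exists_diamond_code hA {n | ∃ O ∈ J, V n ⊆ O}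
    have hcover : IsOmegaCover (V '' code γ) Z := fun F hF => by
      obtain ⟨O, hO, hFO⟩ := hJ F hF
      obtain ⟨n, hFn, hnO⟩ := hV F O (hJo O hO) hFO
      exact ⟨V n, ⟨n, (Set.ext_iff.1 hcode n).2 ⟨O, hO, hnO⟩, rfl⟩, hFn⟩
    obtain ⟨δ, hδ, hγδ, hAδ, hrefl⟩ := exists_guessing_reflecting hA
      (P := fun α => rationalIntervals ∪ P α)
      (fun α hα => countable_rationalIntervals.union (hstage α hα).countable) x Z hγ
    have hZδ : x '' (A δ ∩ Iio δ) ⊆ Z := by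
      rintro _ ⟨β, ⟨hβ, -⟩, rfl⟩
      rw [hAδ] at hβ
      exact hβ.2
    obtain ⟨D, hDJ, hDZ, hD⟩ := (hstage δ hδ).capture ⟨γ, hγδ⟩ (hcover.mono hZδ)
    have hO : ∀ n, ∃ O ∈ J, D n ⊆ O := fun n => by
      obtain ⟨m, hm, hmD⟩ := hDJ n
      exact hmD ▸ (Set.ext_iff.1 hcode m).1 hm
    choose O hOJ hDO using hO
    have hev : ∀ z ∈ Z, ∀ᶠ n in atTop, z ∈ D n := by
      intro z hz
      obtain ⟨β, hβ, rfl⟩ := hZ hz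
      rcases lt_or_ge β δ with hβδ | hβδ
      · exact hDZ _ ⟨β, ⟨hAδ ▸ ⟨hβδ, hz⟩, hβδ⟩, rfl⟩
      · have hmem : x β ∈ ⋃₀ P δ := by
          rcases hβδ.eq_or_lt with rfl | hlt
          · exact (hstage δ hδ).mem_sUnion
          · exact (hstage β hβ).sUnion_subset ⟨δ, hlt⟩ (hstage β hβ).mem_sUnion
        rcases hD _ hmem with h | ⟨p, hp, hxp, hdis⟩
        · exact h
        · have hα : ∃ α < δ, p ∈ rationalIntervals ∪ P α := by
            rcases hp with hp | hp
            · exact ⟨γ, hγδ, .inl hp⟩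
            · obtain ⟨α, hα⟩ := mem_iUnion.1 hp
              exact ⟨α, α.2, .inr hα⟩
          obtain ⟨α, hαδ, hpα⟩ := hα
          obtain ⟨ε, hε, hxε⟩ := hrefl α hαδ p hpα ⟨β, hβ, hxp, hz⟩
          exact (disjoint_left.1 hdis hxε.1 ⟨ε, ⟨hAδ ▸ ⟨hε, hxε.2⟩, hε⟩, rfl⟩).elim
    refine ⟨O, hOJ, fun z hz => ?_⟩
    obtain ⟨m, hm⟩ := eventually_atTop.1 (hev z hz)
    exact mem_iUnion.2 ⟨m, mem_iInter₂.2 fun n hn => hDO n (hm n hn.le)⟩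
  · refine eq_univ_of_forall fun y => ?_
    obtain ⟨S, rfl⟩ := hdec y
    obtain ⟨γ, hγ, rfl⟩ := exists_diamond_code hA S
    exact ⟨x γ, mem_image_of_mem x hγ, _, (hstage γ hγ).frequently_mem, add_sub_cancel _ _⟩
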